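/- For every real K with 0 < K ≤ 2 there exists a function f : ℝ → ℝ, real-analytic on ℝ, with f(x+1) = f(x) + 1 and deriv f x > 0 for all x ∈ ℝ, such that: (i) the fixed point set of f is exactly ℤ (f x = x if and only if x is an integer); (ii) deriv f 0 = 1 and deriv (deriv f) 0 = 0; (iii) ∫_0^1 |deriv (deriv f) x| dx ≤ 2K; and (iv) liminf_{n→∞} (1/n) ∫_0^1 |deriv (deriv (f^[n])) x / deriv (f^[n]) x| dx > 0. -/

import Mathlib

open Filter intervalIntegral

/-!
For a diffeomorphism `f` of `[a, b]` the quantity `∫ |(log (f^[n])')'|` is the total variation of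
`log (f^[n])'`, and the chain rule bounds it above by `n ∫ |(log f')'|`. For a linear lower bound,
pick a short interval `[q, p]` inside a fundamental domain `[q, f q]` on which `log f'` drops by a
definite amount. For each `k < n`, the preimage of `[q, p]` under `f^[k]` crosses it once in its
first `n` iterates. Its other iterates have total length small compared with the drop, because
iterates of `f` have bounded distortion on fundamental domains and `[q, p]` occupies a small part
of its own. Where `f''` is moderate outside a neighbourhood of `p`, they cannot cancel the drop,
and these `n` disjoint preimages each contribute a fixed amount to the variation.

Such an `f` is obtained by adding to the identity a wide bump, which fixes the length of the
fundamental domain, and a bump with derivative of order one on an arbitrarily short interval.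
-/

section Variation

variable {g : ℝ → ℝ}

theorem abs_sub_le_integral_abs_deriv (hg : ContDiff ℝ 1 g) {a b u v : ℝ}
    (hu : u ∈ Set.Icc a b) (hv : v ∈ Set.Icc a b) :
    |g u - g v| ≤ ∫ x in a..b, |deriv g x| := by
  have hcont : Continuous (deriv g) := hg.continuous_deriv_one
  have hab : a ≤ b := hu.1.trans hu.2
  have hftc : ∫ x in v..u, deriv g x = g u - g v :=
    integral_deriv_eq_sub (fun x _ => hg.differentiable_one x) (hcont.intervalIntegrable _ _)
  have hsub : Set.uIoc v u ⊆ Set.uIoc a b := by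
    rw [Set.uIoc_of_le hab]
    exact Set.Ioc_subset_Ioc (le_min hv.1 hu.1) (max_le hv.2 hu.2)
  calc |g u - g v| ≤ |(∫ x in v..u, |deriv g x|)| := by
        rw [← hftc]
        exact norm_integral_le_abs_integral_norm (f := deriv g)
    _ ≤ |(∫ x in a..b, |deriv g x|)| :=
        abs_integral_mono_interval hsub (Eventually.of_forall fun x => abs_nonneg _)
          (hcont.abs.intervalIntegrable _ _)
    _ = ∫ x in a..b, |deriv g x| := abs_of_nonneg (integral_nonneg hab fun x _ => abs_nonneg _)

theorem sum_abs_sub_le_integral_abs_deriv (hg : ContDiff ℝ 1 g) {u v : ℕ → ℝ}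
    (huv : ∀ k, u k ≤ v k) (hvu : ∀ k, v (k + 1) ≤ u k) (n : ℕ) :
    ∑ k ∈ Finset.range n, |g (u k) - g (v k)| ≤ ∫ x in v n..v 0, |deriv g x| := by
  have hint (a b : ℝ) : IntervalIntegrable (fun x => |deriv g x|) MeasureTheory.volume a b :=
    hg.continuous_deriv_one.abs.intervalIntegrable _ _
  induction n with
  | zero => simp only [Finset.sum_range_zero, integral_same, le_refl]
  | succ n ih =>
    rw [Finset.sum_range_succ, ← integral_add_adjacent_intervals (hint _ (v n)) (hint _ _),
      add_comm]
    exact add_le_add (abs_sub_le_integral_abs_deriv hg ⟨hvu n, huv n⟩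
      ⟨(hvu n).trans (huv n), le_rfl⟩) ih

theorem integral_abs_mono_interval (hg : Continuous g) {a b c d : ℝ} (hca : c ≤ a) (hab : a ≤ b)
    (hbd : b ≤ d) : ∫ x in a..b, |g x| ≤ ∫ x in c..d, |g x| :=
  integral_mono_interval hca hab hbd (Eventually.of_forall fun _ => abs_nonneg _)
    (hg.abs.intervalIntegrable _ _)

end Variation

theorem liminf_pos_of_mul_le_of_le_mul {u : ℕ → ℝ} {σ C : ℝ} (hσ : 0 < σ)
    (hlower : ∀ n : ℕ, n * σ ≤ u n) (hupper : ∀ n : ℕ, u n ≤ n * C) :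
    0 < liminf (fun n : ℕ => 1 / (n : ℝ) * u n) atTop := by
  have hbounds : ∀ᶠ n : ℕ in atTop, σ ≤ 1 / (n : ℝ) * u n ∧ 1 / (n : ℝ) * u n ≤ C := by
    filter_upwards [eventually_gt_atTop 0] with n hn
    have hn' : (0 : ℝ) < n := by exact_mod_cast hn
    rw [one_div, le_inv_mul_iff₀ hn', inv_mul_le_iff₀ hn']
    exact ⟨hlower n, hupper n⟩
  have hcobdd : IsCoboundedUnder (· ≥ ·) atTop fun n : ℕ => 1 / (n : ℝ) * u n :=
    IsBoundedUnder.isCoboundedUnder_ge ⟨C, eventually_map.2 (hbounds.mono fun _ h => h.2)⟩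
  exact hσ.trans_le (le_liminf_of_le hcobdd (hbounds.mono fun _ h => h.1))

section Nonlinearity

variable {f g : ℝ → ℝ}

theorem contDiff_deriv_of_two (hf : ContDiff ℝ 2 f) : ContDiff ℝ 1 (deriv f) :=
  hf.iterate_deriv' 1 1

theorem contDiff_log_deriv (hf : ContDiff ℝ 2 f) (hf' : ∀ x, 0 < deriv f x) :
    ContDiff ℝ 1 (Real.log ∘ deriv f) :=
  (contDiff_deriv_of_two hf).log fun x => (hf' x).ne'

theorem deriv_log_deriv (hf : ContDiff ℝ 2 f) (hf' : ∀ x, 0 < deriv f x) :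
    deriv (Real.log ∘ deriv f) = logDeriv (deriv f) :=
  funext fun x => Real.deriv_log_comp_eq_logDeriv
    ((contDiff_deriv_of_two hf).differentiable_one x) (hf' x).ne'

theorem continuous_logDeriv_deriv (hf : ContDiff ℝ 2 f) (hf' : ∀ x, 0 < deriv f x) :
    Continuous (logDeriv (deriv f)) :=
  deriv_log_deriv hf hf' ▸ (contDiff_log_deriv hf hf').continuous_deriv_one

theorem abs_log_deriv_sub_le_integral (hf : ContDiff ℝ 2 f) (hf' : ∀ x, 0 < deriv f x)
    {a b u v : ℝ} (hu : u ∈ Set.Icc a b) (hv : v ∈ Set.Icc a b) :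
    |Real.log (deriv f u) - Real.log (deriv f v)| ≤ ∫ x in a..b, |logDeriv (deriv f) x| := by
  simpa only [deriv_log_deriv hf hf', Function.comp_apply] using
    abs_sub_le_integral_abs_deriv (contDiff_log_deriv hf hf') hu hv

theorem abs_log_deriv_sub_le_mul (hf : ContDiff ℝ 2 f) (hf' : ∀ x, 0 < deriv f x)
    {u v L : ℝ} (huv : u ≤ v) (hL : ∀ x ∈ Set.Icc u v, |logDeriv (deriv f) x| ≤ L) :
    |Real.log (deriv f u) - Real.log (deriv f v)| ≤ L * (v - u) := by
  have hbound := (convex_Icc u v).norm_image_sub_le_of_norm_deriv_le (f := Real.log ∘ deriv f)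
    (fun x _ => (contDiff_log_deriv hf hf').differentiable_one x)
    (fun x hx => by rw [deriv_log_deriv hf hf']; exact hL x hx)
    (Set.right_mem_Icc.2 huv) (Set.left_mem_Icc.2 huv)
  rwa [Real.norm_eq_abs, Real.norm_eq_abs, abs_sub_comm u v, abs_of_nonneg (sub_nonneg.2 huv)]
    at hbound

theorem logDeriv_deriv_comp (hf : ContDiff ℝ 2 f) (hf' : ∀ x, 0 < deriv f x)
    (hg : ContDiff ℝ 2 g) (hg' : ∀ x, 0 < deriv g x) (x : ℝ) :
    logDeriv (deriv (f ∘ g)) x =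
      logDeriv (deriv f) (g x) * deriv g x + logDeriv (deriv g) x := by
  have hchain : deriv (f ∘ g) = fun y => (deriv f ∘ g) y * deriv g y := funext fun y =>
    deriv_comp y (hf.differentiable two_ne_zero _) (hg.differentiable two_ne_zero _)
  have hdf : DifferentiableAt ℝ (deriv f) (g x) :=
    (contDiff_deriv_of_two hf).differentiable_one _
  have hdg : DifferentiableAt ℝ g x := hg.differentiable two_ne_zero _
  rw [hchain, logDeriv_mul (f := deriv f ∘ g) x (hf' _).ne' (hg' x).ne' (hdf.comp x hdg)
    ((contDiff_deriv_of_two hg).differentiable_one _), logDeriv_comp hdf hdg]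

theorem integral_abs_logDeriv_deriv_comp_le (hf : ContDiff ℝ 2 f) (hf' : ∀ x, 0 < deriv f x)
    (hg : ContDiff ℝ 2 g) (hg' : ∀ x, 0 < deriv g x) {a b : ℝ} (hab : a ≤ b) :
    ∫ x in a..b, |logDeriv (deriv (f ∘ g)) x| ≤
      (∫ x in g a..g b, |logDeriv (deriv f) x|) + ∫ x in a..b, |logDeriv (deriv g) x| := by
  have hcf : Continuous fun x => |logDeriv (deriv f) x| := (continuous_logDeriv_deriv hf hf').abs
  have hcg : Continuous fun x => |logDeriv (deriv g) x| := (continuous_logDeriv_deriv hg hg').abs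
  have hcg' : Continuous (deriv g) := (contDiff_deriv_of_two hg).continuous
  have hcfg : Continuous fun x => |logDeriv (deriv f) (g x)| * deriv g x :=
    (hcf.comp hg.continuous).mul hcg'
  have hsubst : ∫ x in a..b, |logDeriv (deriv f) (g x)| * deriv g x =
      ∫ x in g a..g b, |logDeriv (deriv f) x| :=
    integral_comp_mul_deriv (fun x _ => (hg.differentiable two_ne_zero x).hasDerivAt)
      hcg'.continuousOn hcf
  have hpointwise (x : ℝ) : |logDeriv (deriv (f ∘ g)) x| ≤
      |logDeriv (deriv f) (g x)| * deriv g x + |logDeriv (deriv g) x| := by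
    rw [logDeriv_deriv_comp hf hf' hg hg']
    refine (abs_add_le _ _).trans_eq ?_
    rw [abs_mul, abs_of_pos (hg' x)]
  have hcont : Continuous fun x => |logDeriv (deriv (f ∘ g)) x| := by
    simp only [logDeriv_deriv_comp hf hf' hg hg']
    exact ((((continuous_logDeriv_deriv hf hf').comp hg.continuous).mul hcg').add
      (continuous_logDeriv_deriv hg hg')).abs
  calc ∫ x in a..b, |logDeriv (deriv (f ∘ g)) x|
      ≤ ∫ x in a..b, (|logDeriv (deriv f) (g x)| * deriv g x + |logDeriv (deriv g) x|) :=
        integral_mono hab (hcont.intervalIntegrable _ _)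
          ((hcfg.add hcg).intervalIntegrable _ _) hpointwise
    _ = _ := by
        rw [integral_add (hcfg.intervalIntegrable _ _) (hcg.intervalIntegrable _ _), hsubst]

end Nonlinearity

section Iterate

variable {f : ℝ → ℝ}

theorem contDiff_iterate {k : WithTop ℕ∞} (hf : ContDiff ℝ k f) (n : ℕ) :
    ContDiff ℝ k f^[n] := by
  induction n with
  | zero => exact contDiff_id
  | succ n ih => rw [Function.iterate_succ']; exact hf.comp ih

theorem deriv_iterate_succ (hf : Differentiable ℝ f) (n : ℕ) (x : ℝ) :
    deriv f^[n + 1] x = deriv f (f^[n] x) * deriv f^[n] x := by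
  rw [Function.iterate_succ']
  exact deriv_comp x (hf _) (hf.iterate n _)

theorem deriv_iterate_pos (hf' : ∀ x, 0 < deriv f x) (n : ℕ) (x : ℝ) : 0 < deriv f^[n] x := by
  have hf : Differentiable ℝ f := fun x => differentiableAt_of_deriv_ne_zero (hf' x).ne'
  induction n with
  | zero => simp only [Function.iterate_zero, deriv_id, zero_lt_one]
  | succ n ih => rw [deriv_iterate_succ hf]; exact mul_pos (hf' _) ih

theorem log_deriv_iterate (hf' : ∀ x, 0 < deriv f x) (n : ℕ) (x : ℝ) :
    Real.log (deriv f^[n] x) = ∑ j ∈ Finset.range n, Real.log (deriv f (f^[j] x)) := by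
  have hf : Differentiable ℝ f := fun x => differentiableAt_of_deriv_ne_zero (hf' x).ne'
  induction n with
  | zero => simp only [Function.iterate_zero, deriv_id, Real.log_one, Finset.sum_range_zero]
  | succ n ih =>
    rw [deriv_iterate_succ hf, Real.log_mul (hf' _).ne' (deriv_iterate_pos hf' n x).ne',
      Finset.sum_range_succ, ih, add_comm]

theorem integral_abs_logDeriv_deriv_iterate_le (hf : ContDiff ℝ 2 f) (hf' : ∀ x, 0 < deriv f x)
    {a b : ℝ} (ha : Function.IsFixedPt f a) (hb : Function.IsFixedPt f b) (hab : a ≤ b) (n : ℕ) :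
    ∫ x in a..b, |logDeriv (deriv f^[n]) x| ≤ n * ∫ x in a..b, |logDeriv (deriv f) x| := by
  induction n with
  | zero => simp [logDeriv_apply]
  | succ n ih =>
    have hcomp := integral_abs_logDeriv_deriv_comp_le hf hf' (contDiff_iterate hf n)
      (deriv_iterate_pos hf' n) hab
    rw [← Function.iterate_succ', ha.iterate n, hb.iterate n] at hcomp
    push_cast
    linarith

theorem exists_iterate_eq (hf : Continuous f) {a b y : ℝ} (ha : Function.IsFixedPt f a)
    (hb : Function.IsFixedPt f b) (hy : y ∈ Set.Icc a b) (n : ℕ) :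
    ∃ x ∈ Set.Icc a b, f^[n] x = y := by
  have hivt := intermediate_value_Icc (hy.1.trans hy.2) (hf.iterate n).continuousOn
  rw [ha.iterate n, hb.iterate n] at hivt
  exact hivt hy

theorem iterate_mem_Icc (hf : Monotone f) {a b x : ℝ} (ha : Function.IsFixedPt f a)
    (hb : Function.IsFixedPt f b) (hx : x ∈ Set.Icc a b) (n : ℕ) : f^[n] x ∈ Set.Icc a b := by
  rw [← ha.iterate n, ← hb.iterate n]
  exact ⟨hf.iterate n hx.1, hf.iterate n hx.2⟩

section Distortion

variable {a b : ℝ}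

-- The translates of the fundamental domain `[x, f x]` do not overlap, so their contributions
-- to the total variation of `log f'` add up to at most the variation over `[a, b]`.
theorem abs_log_deriv_iterate_sub_le (hf : ContDiff ℝ 2 f) (hf' : ∀ x, 0 < deriv f x)
    (ha : Function.IsFixedPt f a) (hb : Function.IsFixedPt f b)
    {x u v : ℝ} (hx : x ∈ Set.Icc a b) (hu : u ∈ Set.Icc x (f x))
    (hv : v ∈ Set.Icc x (f x)) (n : ℕ) :
    |Real.log (deriv f^[n] u) - Real.log (deriv f^[n] v)| ≤
      ∫ t in a..b, |logDeriv (deriv f) t| := by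
  have hmono : Monotone f := (strictMono_of_deriv_pos hf').monotone
  have hcont := continuous_logDeriv_deriv hf hf'
  have hdomain (j : ℕ) {w : ℝ} (hw : w ∈ Set.Icc x (f x)) :
      f^[j] w ∈ Set.Icc (f^[j] x) (f^[j + 1] x) :=
    ⟨hmono.iterate j hw.1, hmono.iterate j hw.2⟩
  have hx_le : x ≤ f^[n] x := hmono.monotone_iterate_of_le_map (hu.1.trans hu.2) n.zero_le
  rw [log_deriv_iterate hf', log_deriv_iterate hf', ← Finset.sum_sub_distrib]
  calc |∑ j ∈ Finset.range n,
        (Real.log (deriv f (f^[j] u)) - Real.log (deriv f (f^[j] v)))|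
      ≤ ∑ j ∈ Finset.range n,
        |Real.log (deriv f (f^[j] u)) - Real.log (deriv f (f^[j] v))| :=
        Finset.abs_sum_le_sum_abs _ _
    _ ≤ ∑ j ∈ Finset.range n, ∫ t in f^[j] x..f^[j + 1] x, |logDeriv (deriv f) t| :=
        Finset.sum_le_sum fun j _ =>
          abs_log_deriv_sub_le_integral hf hf' (hdomain j hu) (hdomain j hv)
    _ = ∫ t in x..f^[n] x, |logDeriv (deriv f) t| :=
        sum_integral_adjacent_intervals fun _ _ => hcont.abs.intervalIntegrable _ _
    _ ≤ ∫ t in a..b, |logDeriv (deriv f) t| :=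
        integral_abs_mono_interval hcont hx.1 hx_le (iterate_mem_Icc hmono ha hb hx n).2

theorem slope_iterate_le_exp_mul_slope (hf : ContDiff ℝ 2 f) (hf' : ∀ x, 0 < deriv f x)
    (ha : Function.IsFixedPt f a) (hb : Function.IsFixedPt f b)
    {x y z : ℝ} (hx : x ∈ Set.Icc a b) (hy : y ∈ Set.Ioc x (f x))
    (hz : z ∈ Set.Ioc x (f x)) (n : ℕ) :
    slope f^[n] x y ≤ Real.exp (∫ t in a..b, |logDeriv (deriv f) t|) * slope f^[n] x z := by
  have hdiff : Differentiable ℝ f^[n] := (hf.differentiable two_ne_zero).iterate n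
  obtain ⟨u, hu, hu_slope⟩ := exists_deriv_eq_slope' f^[n] hy.1 hdiff.continuous.continuousOn
    hdiff.differentiableOn
  obtain ⟨v, hv, hv_slope⟩ := exists_deriv_eq_slope' f^[n] hz.1 hdiff.continuous.continuousOn
    hdiff.differentiableOn
  have hlog := (abs_le.1 (abs_log_deriv_iterate_sub_le hf hf' ha hb hx
    ⟨hu.1.le, hu.2.le.trans hy.2⟩ ⟨hv.1.le, hv.2.le.trans hz.2⟩ n)).2
  have hpos := deriv_iterate_pos hf' n
  rw [← hu_slope, ← hv_slope, ← Real.exp_log (hpos u), ← Real.exp_log (hpos v), ← Real.exp_add]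
  exact Real.exp_le_exp.2 (by linarith)

theorem iterate_sub_iterate_le (hf : ContDiff ℝ 2 f) (hf' : ∀ x, 0 < deriv f x)
    (ha : Function.IsFixedPt f a) (hb : Function.IsFixedPt f b)
    {x y : ℝ} (hx : x ∈ Set.Icc a b) (hxy : x < y) (hyx : y ≤ f x) (j k : ℕ) :
    f^[j] y - f^[j] x ≤ Real.exp (∫ t in a..b, |logDeriv (deriv f) t|) *
      ((f^[k] y - f^[k] x) / (f^[k + 1] x - f^[k] x)) * (f^[j + 1] x - f^[j] x) := by
  have hmono : StrictMono f := strictMono_of_deriv_pos hf'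
  have hlt (i : ℕ) : f^[i] x < f^[i] y := hmono.iterate i hxy
  have hle (i : ℕ) : f^[i] y ≤ f^[i + 1] x := (hmono.iterate i).monotone hyx
  have hmem (i : ℕ) : f^[i] x ∈ Set.Icc a b := iterate_mem_Icc hmono.monotone ha hb hx i
  have hy (i : ℕ) : f^[i] y ∈ Set.Ioc (f^[i] x) (f (f^[i] x)) :=
    ⟨hlt i, (hle i).trans_eq (Function.iterate_succ_apply' f i x)⟩
  have hfx (i : ℕ) : f (f^[i] x) ∈ Set.Ioc (f^[i] x) (f (f^[i] x)) :=
    ⟨(hy i).1.trans_le (hy i).2, le_rfl⟩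
  have hgap (i : ℕ) : 0 < f^[i] y - f^[i] x := sub_pos.2 (hlt i)
  have hstep (i : ℕ) : 0 < f^[i + 1] x - f^[i] x := sub_pos.2 ((hlt i).trans_le (hle i))
  rw [mul_assoc, div_mul_eq_mul_div, ← mul_div_assoc, le_div_iff₀ (hstep k)]
  rcases le_total k j with hkj | hjk
  · obtain ⟨d, rfl⟩ := Nat.exists_eq_add_of_le' hkj
    have hslope := slope_iterate_le_exp_mul_slope hf hf' ha hb (hmem k) (hy k) (hfx k) d
    simp only [slope_def_field, ← Function.iterate_succ_apply', ← Function.iterate_add_apply,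
      Nat.succ_eq_add_one, ← add_assoc] at hslope
    rw [← mul_div_assoc, div_le_div_iff₀ (hgap k) (hstep k)] at hslope
    linarith
  · obtain ⟨d, rfl⟩ := Nat.exists_eq_add_of_le' hjk
    have hslope := slope_iterate_le_exp_mul_slope hf hf' ha hb (hmem j) (hfx j) (hy j) d
    simp only [slope_def_field, ← Function.iterate_succ_apply', ← Function.iterate_add_apply,
      Nat.succ_eq_add_one, ← add_assoc] at hslope
    rw [← mul_div_assoc, div_le_div_iff₀ (hstep j) (hgap j)] at hslope
    linarith

theorem abs_log_deriv_iterate_sub_le_mul (hf : ContDiff ℝ 2 f) (hf' : ∀ x, 0 < deriv f x)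
    (ha : Function.IsFixedPt f a) (hb : Function.IsFixedPt f b)
    {x y L : ℝ} {j k : ℕ} (hjk : j ≠ k)
    (hx : x ∈ Set.Icc a b) (hxy : x ≤ y) (hyx : y ≤ f x)
    (hL : ∀ t ∈ Set.Icc a b, f t ≤ f^[k] y ∨ f^[k + 1] x ≤ t → |logDeriv (deriv f) t| ≤ L) :
    |Real.log (deriv f (f^[j] x)) - Real.log (deriv f (f^[j] y))| ≤
      L * (f^[j] y - f^[j] x) := by
  have hmono : Monotone f := (strictMono_of_deriv_pos hf').monotone
  have hx_mono : Monotone fun i => f^[i] x := hmono.monotone_iterate_of_le_map (hxy.trans hyx)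
  have hy_mono : Monotone fun i => f^[i] y :=
    hmono.monotone_iterate_of_le_map (hyx.trans (hmono hxy))
  have hmem (i : ℕ) : f^[i] x ∈ Set.Icc a b := iterate_mem_Icc hmono ha hb hx i
  refine abs_log_deriv_sub_le_mul hf hf' (hmono.iterate j hxy) fun t ht => ?_
  have htb : t ≤ b := ht.2.trans ((hmono.iterate j hyx).trans (hmem (j + 1)).2)
  refine hL t ⟨(hmem j).1.trans ht.1, htb⟩ ?_
  rcases hjk.lt_or_gt with hlt | hgt
  · left
    calc f t ≤ f (f^[j] y) := hmono ht.2
      _ = f^[j + 1] y := (Function.iterate_succ_apply' f j y).symm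
      _ ≤ f^[k] y := hy_mono hlt
  · exact .inr ((hx_mono hgt).trans ht.1)

theorem sum_iterate_sub_iterate_le (hf : ContDiff ℝ 2 f) (hf' : ∀ x, 0 < deriv f x)
    (ha : Function.IsFixedPt f a) (hb : Function.IsFixedPt f b)
    {x y : ℝ} (hx : x ∈ Set.Icc a b) (hxy : x < y)
    (hyx : y ≤ f x) (s : Finset ℕ) (k : ℕ) :
    ∑ j ∈ s, (f^[j] y - f^[j] x) ≤ Real.exp (∫ t in a..b, |logDeriv (deriv f) t|) *
      ((f^[k] y - f^[k] x) / (f^[k + 1] x - f^[k] x)) * (b - a) := by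
  have hmono : Monotone f := (strictMono_of_deriv_pos hf').monotone
  have hx_mono : Monotone fun i => f^[i] x := hmono.monotone_iterate_of_le_map (hxy.le.trans hyx)
  have hgap (i : ℕ) : f^[i] x ≤ f^[i] y := hmono.iterate i hxy.le
  obtain ⟨n, hn⟩ := s.exists_nat_subset_range
  calc ∑ j ∈ s, (f^[j] y - f^[j] x) ≤ ∑ j ∈ Finset.range n, (f^[j] y - f^[j] x) :=
        Finset.sum_le_sum_of_subset_of_nonneg hn fun j _ _ => sub_nonneg.2 (hgap j)
    _ ≤ ∑ j ∈ Finset.range n, Real.exp (∫ t in a..b, |logDeriv (deriv f) t|) *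
        ((f^[k] y - f^[k] x) / (f^[k + 1] x - f^[k] x)) * (f^[j + 1] x - f^[j] x) :=
        Finset.sum_le_sum fun j _ => iterate_sub_iterate_le hf hf' ha hb hx hxy hyx j k
    _ = Real.exp (∫ t in a..b, |logDeriv (deriv f) t|) *
        ((f^[k] y - f^[k] x) / (f^[k + 1] x - f^[k] x)) * (f^[n] x - x) := by
        rw [← Finset.mul_sum, Finset.sum_range_sub fun j => f^[j] x, Function.iterate_zero_apply]
    _ ≤ _ := by
        have hn_mem := iterate_mem_Icc hmono ha hb hx n
        have hratio : 0 ≤ (f^[k] y - f^[k] x) / (f^[k + 1] x - f^[k] x) :=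
          div_nonneg (sub_nonneg.2 (hgap k)) (sub_nonneg.2 (hx_mono k.le_succ))
        gcongr
        exacts [hn_mem.2, hx.1]

-- Only the passage through `[f^[k] x, f^[k] y]` may distort strongly; the other translates of
-- `[x, y]` avoid the region where `f''` is large and have bounded total length.
theorem sub_mul_le_log_deriv_iterate_sub (hf : ContDiff ℝ 2 f) (hf' : ∀ x, 0 < deriv f x)
    (ha : Function.IsFixedPt f a) (hb : Function.IsFixedPt f b)
    {x y L : ℝ} {n k : ℕ} (hkn : k < n)
    (hx : x ∈ Set.Icc a b) (hxy : x < y) (hyx : y ≤ f x)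
    (hL : ∀ t ∈ Set.Icc a b, f t ≤ f^[k] y ∨ f^[k + 1] x ≤ t → |logDeriv (deriv f) t| ≤ L) :
    Real.log (deriv f (f^[k] x)) - Real.log (deriv f (f^[k] y)) -
      L * (Real.exp (∫ t in a..b, |logDeriv (deriv f) t|) *
        ((f^[k] y - f^[k] x) / (f^[k + 1] x - f^[k] x)) * (b - a)) ≤
      Real.log (deriv f^[n] x) - Real.log (deriv f^[n] y) := by
  have hmono : Monotone f := (strictMono_of_deriv_pos hf').monotone
  have hL_nonneg : 0 ≤ L := (abs_nonneg _).trans <|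
    hL a ⟨le_rfl, hx.1.trans hx.2⟩ <| .inl <| ha.symm ▸
      (iterate_mem_Icc hmono ha hb hx k).1.trans (hmono.iterate k hxy.le)
  have hother : |∑ j ∈ (Finset.range n).erase k,
      (Real.log (deriv f (f^[j] x)) - Real.log (deriv f (f^[j] y)))| ≤
      L * (Real.exp (∫ t in a..b, |logDeriv (deriv f) t|) *
        ((f^[k] y - f^[k] x) / (f^[k + 1] x - f^[k] x)) * (b - a)) :=
    calc _ ≤ ∑ j ∈ (Finset.range n).erase k,
          |Real.log (deriv f (f^[j] x)) - Real.log (deriv f (f^[j] y))| :=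
          Finset.abs_sum_le_sum_abs _ _
      _ ≤ ∑ j ∈ (Finset.range n).erase k, L * (f^[j] y - f^[j] x) :=
          Finset.sum_le_sum fun j hj => abs_log_deriv_iterate_sub_le_mul hf hf' ha hb
            (Finset.ne_of_mem_erase hj) hx hxy.le hyx hL
      _ ≤ _ := by
          rw [← Finset.mul_sum]
          exact mul_le_mul_of_nonneg_left
            (sum_iterate_sub_iterate_le hf hf' ha hb hx hxy hyx _ k) hL_nonneg
  rw [log_deriv_iterate hf', log_deriv_iterate hf', ← Finset.sum_sub_distrib,
    ← Finset.add_sum_erase _ _ (Finset.mem_range.2 hkn)]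
  linarith [(abs_le.1 hother).1]

theorem mul_le_integral_abs_logDeriv_deriv_iterate (hf : ContDiff ℝ 2 f) (hf' : ∀ x, 0 < deriv f x)
    (ha : Function.IsFixedPt f a) (hb : Function.IsFixedPt f b)
    {p q L σ : ℝ} (hq : q ∈ Set.Icc a b)
    (hqp : q < p) (hpq : p ≤ f q)
    (hL : ∀ x ∈ Set.Icc a b, f x ≤ p ∨ f q ≤ x → |logDeriv (deriv f) x| ≤ L)
    (hσ : σ + L * (Real.exp (∫ x in a..b, |logDeriv (deriv f) x|) *
      ((p - q) / (f q - q)) * (b - a)) ≤ Real.log (deriv f q) - Real.log (deriv f p)) (n : ℕ) :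
    n * σ ≤ ∫ x in a..b, |logDeriv (deriv f^[n]) x| := by
  have hmono : StrictMono f := strictMono_of_deriv_pos hf'
  have hp : p ∈ Set.Icc a b :=
    ⟨hq.1.trans hqp.le, hpq.trans ((hmono.monotone hq.2).trans_eq hb)⟩
  choose Q hQ hfQ using exists_iterate_eq hf.continuous ha hb hq
  choose P hP hfP using exists_iterate_eq hf.continuous ha hb hp
  have hQP (k : ℕ) : Q k < P k := (hmono.iterate k).lt_iff_lt.1 (by rwa [hfQ, hfP])
  have hPQ (k : ℕ) : P k ≤ f (Q k) := (hmono.iterate k).le_iff_le.1 <| by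
    rwa [hfP, ← Function.iterate_succ_apply, Function.iterate_succ_apply', hfQ]
  have hPQ' (k : ℕ) : P (k + 1) ≤ Q k := (hmono.iterate (k + 1)).le_iff_le.1 <| by
    rwa [hfP, Function.iterate_succ_apply', hfQ]
  have hjump (k : ℕ) (hk : k ∈ Finset.range n) :
      σ ≤ |Real.log (deriv f^[n] (Q k)) - Real.log (deriv f^[n] (P k))| := by
    have hstep : f^[k + 1] (Q k) = f q := by rw [Function.iterate_succ_apply', hfQ]
    have hbound := sub_mul_le_log_deriv_iterate_sub hf hf' ha hb (L := L) (Finset.mem_range.1 hk)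
      (hQ k) (hQP k) (hPQ k) (by rwa [hfP, hstep])
    rw [hfP, hfQ, hstep] at hbound
    exact (by linarith : σ ≤ _).trans (le_abs_self _)
  have hfn := contDiff_iterate hf n
  have hfn' := deriv_iterate_pos hf' n
  have hsum := sum_abs_sub_le_integral_abs_deriv (contDiff_log_deriv hfn hfn')
    (fun k => (hQP k).le) hPQ' n
  rw [deriv_log_deriv hfn hfn'] at hsum
  calc (n : ℝ) * σ = ∑ _k ∈ Finset.range n, σ := by
        rw [Finset.sum_const, Finset.card_range, nsmul_eq_mul]
    _ ≤ _ := Finset.sum_le_sum hjump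
    _ ≤ ∫ x in P n..P 0, |logDeriv (deriv f^[n]) x| := hsum
    _ ≤ _ := integral_abs_mono_interval (continuous_logDeriv_deriv hfn hfn') (hP n).1
        (antitone_nat_of_succ_le (fun k => (hPQ' k).trans (hQP k).le) n.zero_le) (hP 0).2

theorem liminf_integral_abs_logDeriv_deriv_iterate_pos (hf : ContDiff ℝ 2 f)
    (hf' : ∀ x, 0 < deriv f x) (ha : Function.IsFixedPt f a) (hb : Function.IsFixedPt f b)
    {p q L σ : ℝ} (hq : q ∈ Set.Icc a b)
    (hqp : q < p) (hpq : p ≤ f q)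
    (hL : ∀ x ∈ Set.Icc a b, f x ≤ p ∨ f q ≤ x → |logDeriv (deriv f) x| ≤ L) (hσ_pos : 0 < σ)
    (hσ : σ + L * (Real.exp (∫ x in a..b, |logDeriv (deriv f) x|) *
      ((p - q) / (f q - q)) * (b - a)) ≤ Real.log (deriv f q) - Real.log (deriv f p)) :
    0 < liminf (fun n : ℕ => 1 / (n : ℝ) * ∫ x in a..b, |logDeriv (deriv f^[n]) x|) atTop :=
  liminf_pos_of_mul_le_of_le_mul hσ_pos
    (mul_le_integral_abs_logDeriv_deriv_iterate hf hf' ha hb hq hqp hpq hL hσ)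
    (integral_abs_logDeriv_deriv_iterate_le hf hf' ha hb (hq.1.trans hq.2))

end Distortion

end Iterate

section SinPeak

/-- The bump `sin (π x) ^ (2 n + 2)`, concentrated near `1 / 2`, with the normalization for which
the maximum of its derivative stays of order `1` while its width, of order `1 / √(n + 1)`, and its
height tend to `0`. -/
noncomputable def sinPeak (n : ℕ) (x : ℝ) : ℝ :=
  Real.sin (Real.pi * x) ^ (2 * n + 2) / √(n + 1)

theorem hasDerivAt_sinPeak (n : ℕ) (x : ℝ) : HasDerivAt (sinPeak n) (2 * Real.pi * √(n + 1) *
    (Real.sin (Real.pi * x) ^ (2 * n + 1) * Real.cos (Real.pi * x))) x := by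
  have hlin : HasDerivAt (fun x : ℝ => Real.pi * x) Real.pi x := hasDerivAt_const_mul Real.pi
  refine ((hlin.sin.fun_pow (2 * n + 2)).div_const √(n + 1)).congr_deriv ?_
  have hsq : √((n : ℝ) + 1) ^ 2 = n + 1 := Real.sq_sqrt (by positivity)
  have hne : √((n : ℝ) + 1) ≠ 0 := by positivity
  rw [div_eq_iff hne, Nat.add_sub_assoc one_le_two]
  push_cast
  linear_combination -2 * Real.pi * Real.sin (Real.pi * x) ^ (2 * n + 1) *
    Real.cos (Real.pi * x) * hsq

theorem deriv_sinPeak (n : ℕ) (x : ℝ) : deriv (sinPeak n) x = 2 * Real.pi * √(n + 1) *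
    (Real.sin (Real.pi * x) ^ (2 * n + 1) * Real.cos (Real.pi * x)) :=
  (hasDerivAt_sinPeak n x).deriv

theorem deriv_deriv_sinPeak (n : ℕ) (x : ℝ) : deriv (deriv (sinPeak n)) x =
    2 * Real.pi ^ 2 * √(n + 1) * ((2 * n + 1) *
      (Real.sin (Real.pi * x) ^ (2 * n) * Real.cos (Real.pi * x) ^ 2) -
      Real.sin (Real.pi * x) ^ (2 * n + 2)) := by
  have hlin : HasDerivAt (fun x : ℝ => Real.pi * x) Real.pi x := hasDerivAt_const_mul Real.pi
  rw [funext (deriv_sinPeak n),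
    (((hlin.sin.fun_pow (2 * n + 1)).fun_mul hlin.cos).const_mul _).deriv, Nat.add_sub_cancel]
  push_cast
  ring

theorem analyticAt_sinPeak (n : ℕ) (x : ℝ) : AnalyticAt ℝ (sinPeak n) x := by
  unfold sinPeak
  fun_prop

theorem contDiff_sinPeak (n : ℕ) {k : WithTop ℕ∞} : ContDiff ℝ k (sinPeak n) :=
  contDiff_iff_contDiffAt.2 fun x => (analyticAt_sinPeak n x).contDiffAt

theorem sinPeak_add_one (n : ℕ) (x : ℝ) : sinPeak n (x + 1) = sinPeak n x := by
  rw [sinPeak, sinPeak, mul_add, mul_one, Real.sin_add_pi, Even.neg_pow ⟨n + 1, by ring⟩]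

theorem sinPeak_nonneg (n : ℕ) (x : ℝ) : 0 ≤ sinPeak n x :=
  div_nonneg (Even.pow_nonneg ⟨n + 1, by ring⟩ _) (Real.sqrt_nonneg _)

theorem sinPeak_eq_zero_iff {n : ℕ} {x : ℝ} : sinPeak n x = 0 ↔ ∃ m : ℤ, x = m := by
  have hne : √((n : ℝ) + 1) ≠ 0 := by positivity
  rw [sinPeak, div_eq_zero_iff, or_iff_left hne, pow_eq_zero_iff (by omega), Real.sin_eq_zero_iff]
  refine exists_congr fun m => ?_
  rw [mul_comm, mul_right_inj' Real.pi_ne_zero, eq_comm]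

theorem one_eighth_le_sinPeak_one {x : ℝ} (hx : x ∈ Set.Icc (1 / 4 : ℝ) (3 / 4)) :
    1 / 8 ≤ sinPeak 1 x := by
  have hcos : Real.cos (2 * (Real.pi * x)) ≤ 0 := by
    apply Real.cos_nonpos_of_pi_div_two_le_of_le <;> nlinarith [hx.1, hx.2, Real.pi_pos]
  have hsin : 1 / 2 ≤ Real.sin (Real.pi * x) ^ 2 := by rw [Real.sin_sq_eq_half_sub]; linarith
  have hsqrt : √((1 : ℕ) + 1 : ℝ) ≤ 2 := by rw [Real.sqrt_le_left two_pos.le]; norm_num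
  have hpow : (1 / 2) ^ 2 ≤ Real.sin (Real.pi * x) ^ (2 * 1 + 2) := by
    rw [show 2 * 1 + 2 = 2 * 2 from rfl, pow_mul]
    gcongr
  rw [sinPeak, le_div_iff₀ (by positivity)]
  calc 1 / 8 * √((1 : ℕ) + 1 : ℝ) ≤ 1 / 8 * 2 := by gcongr
    _ = (1 / 2) ^ 2 := by norm_num
    _ ≤ _ := hpow

theorem prod_div_sq_le (n : ℕ) :
    (∏ i ∈ Finset.range n, (2 * (i : ℝ) + 1) / (2 * i + 2)) ^ 2 ≤ 1 / (n + 1) := by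
  induction n with
  | zero => simp
  | succ n ih =>
    have hfactor : ((2 * (n : ℝ) + 1) / (2 * n + 2)) ^ 2 ≤ (n + 1) / (n + 2) := by
      rw [div_pow, div_le_div_iff₀ (by positivity) (by positivity)]
      nlinarith [n.cast_nonneg (α := ℝ)]
    calc (∏ i ∈ Finset.range (n + 1), (2 * (i : ℝ) + 1) / (2 * i + 2)) ^ 2
        ≤ 1 / ((n : ℝ) + 1) * ((n + 1) / (n + 2)) := by
          rw [Finset.prod_range_succ, mul_pow]
          gcongr
      _ = 1 / ((n + 1 : ℕ) + 1) := by push_cast; field_simp; ring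

theorem integral_sin_pi_mul_pow_even (n : ℕ) : ∫ x in (0 : ℝ)..1, Real.sin (Real.pi * x) ^ (2 * n) =
    ∏ i ∈ Finset.range n, (2 * (i : ℝ) + 1) / (2 * i + 2) := by
  rw [integral_comp_mul_left (fun x => Real.sin x ^ (2 * n)) Real.pi_ne_zero, mul_zero, mul_one,
    integral_sin_pow_even, smul_eq_mul, inv_mul_cancel_left₀ Real.pi_ne_zero]

theorem integral_sinPeak_le (n : ℕ) : ∫ x in (0 : ℝ)..1, sinPeak n x ≤ 1 / (n + 1) := by
  have hpos : (0 : ℝ) < n + 1 := by positivity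
  have hsq := prod_div_sq_le (n + 1)
  have hprod : ∏ i ∈ Finset.range (n + 1), (2 * (i : ℝ) + 1) / (2 * i + 2) ≤ 1 / √(n + 1) := by
    refine (Real.le_sqrt_of_sq_le hsq).trans ?_
    rw [Real.sqrt_div zero_le_one, Real.sqrt_one]
    gcongr
    linarith
  simp only [sinPeak, integral_div]
  rw [show 2 * n + 2 = 2 * (n + 1) by ring, integral_sin_pi_mul_pow_even]
  refine (div_le_div_of_nonneg_right hprod (Real.sqrt_nonneg _)).trans_eq ?_
  rw [div_div, Real.mul_self_sqrt hpos.le]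

theorem abs_deriv_deriv_sinPeak_le_add (n : ℕ) (x : ℝ) : |deriv (deriv (sinPeak n)) x| ≤
    deriv (deriv (sinPeak n)) x + 4 * Real.pi ^ 2 * (n + 1) * sinPeak n x := by
  have hscale : (n + 1) * sinPeak n x = √(n + 1) * Real.sin (Real.pi * x) ^ (2 * n + 2) := by
    rw [sinPeak, ← mul_div_assoc, div_eq_iff (by positivity)]
    linear_combination (-Real.sin (Real.pi * x) ^ (2 * n + 2)) *
      Real.sq_sqrt (by positivity : (0 : ℝ) ≤ n + 1)
  have hneg : 0 ≤ 2 * Real.pi ^ 2 * (√(n + 1) * Real.sin (Real.pi * x) ^ (2 * n + 2)) := by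
    rw [← hscale]
    have := sinPeak_nonneg n x
    positivity
  have hpos : 0 ≤ 2 * Real.pi ^ 2 * √(n + 1) * ((2 * n + 1) *
      (Real.sin (Real.pi * x) ^ (2 * n) * Real.cos (Real.pi * x) ^ 2)) := by
    rw [pow_mul]
    positivity
  rw [deriv_deriv_sinPeak, mul_assoc (4 * Real.pi ^ 2), hscale, abs_le]
  constructor <;> linarith

-- The second derivative has mean zero, so its `L¹` norm is twice the integral of its negative
-- part, which is at most a multiple of the bump itself.
theorem integral_abs_deriv_deriv_sinPeak_le (n : ℕ) :
    ∫ x in (0 : ℝ)..1, |deriv (deriv (sinPeak n)) x| ≤ 4 * Real.pi ^ 2 := by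
  have hderiv : ContDiff ℝ 1 (deriv (sinPeak n)) := contDiff_deriv_of_two (contDiff_sinPeak n)
  have hcont := hderiv.continuous_deriv_one
  have hpeak : Continuous (sinPeak n) := (contDiff_sinPeak n (k := 0)).continuous
  have hmean : ∫ x in (0 : ℝ)..1, deriv (deriv (sinPeak n)) x = 0 := by
    rw [integral_deriv_eq_sub (fun x _ => hderiv.differentiable_one x)
      (hcont.intervalIntegrable _ _), deriv_sinPeak, deriv_sinPeak]
    simp
  calc ∫ x in (0 : ℝ)..1, |deriv (deriv (sinPeak n)) x|
      ≤ ∫ x in (0 : ℝ)..1,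
        (deriv (deriv (sinPeak n)) x + 4 * Real.pi ^ 2 * (n + 1) * sinPeak n x) :=
        integral_mono zero_le_one (hcont.abs.intervalIntegrable _ _)
          ((hcont.add (hpeak.const_mul _)).intervalIntegrable _ _)
          (abs_deriv_deriv_sinPeak_le_add n)
    _ = 4 * Real.pi ^ 2 * (n + 1) * ∫ x in (0 : ℝ)..1, sinPeak n x := by
        rw [integral_add (hcont.intervalIntegrable _ _)
          ((hpeak.const_mul _).intervalIntegrable _ _), hmean, integral_const_mul, zero_add]
    _ ≤ 4 * Real.pi ^ 2 * (n + 1) * (1 / (n + 1)) := by gcongr; exact integral_sinPeak_le n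
    _ = 4 * Real.pi ^ 2 := by field_simp

theorem periodic_deriv_sinPeak (n : ℕ) : Function.Periodic (deriv (sinPeak n)) 1 := fun x => by
  rw [← deriv_comp_add_const, funext (sinPeak_add_one n)]

theorem abs_deriv_sinPeak_le (n : ℕ) (x : ℝ) : |deriv (sinPeak n) x| ≤ 4 * Real.pi ^ 2 := by
  obtain ⟨y, hy, hxy⟩ := (periodic_deriv_sinPeak n).exists_mem_Ico₀ zero_lt_one x
  have hzero : deriv (sinPeak n) 0 = 0 := by rw [deriv_sinPeak]; simp
  have hvar := abs_sub_le_integral_abs_deriv (contDiff_deriv_of_two (contDiff_sinPeak n))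
    (Set.Ico_subset_Icc_self hy) (Set.left_mem_Icc.2 zero_le_one)
  rw [hzero, sub_zero, ← hxy] at hvar
  exact hvar.trans (integral_abs_deriv_deriv_sinPeak_le n)

theorem deriv_sinPeak_nonneg (n : ℕ) {x : ℝ} (hx : x ∈ Set.Icc (0 : ℝ) (1 / 2)) :
    0 ≤ deriv (sinPeak n) x := by
  have hsin : 0 ≤ Real.sin (Real.pi * x) :=
    Real.sin_nonneg_of_nonneg_of_le_pi (by nlinarith [hx.1, Real.pi_pos])
      (by nlinarith [hx.2, Real.pi_pos])
  have hcos : 0 ≤ Real.cos (Real.pi * x) :=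
    Real.cos_nonneg_of_neg_pi_div_two_le_of_le (by nlinarith [hx.1, Real.pi_pos])
      (by nlinarith [hx.2, Real.pi_pos])
  rw [deriv_sinPeak]
  positivity

theorem deriv_sinPeak_half (n : ℕ) : deriv (sinPeak n) (1 / 2) = 0 := by
  rw [deriv_sinPeak, mul_one_div, Real.cos_pi_div_two, mul_zero, mul_zero]

theorem one_sub_mul_sq_le_cos_pow {θ : ℝ} (hθ : θ ^ 2 ≤ 1) (n : ℕ) :
    1 - n * θ ^ 2 ≤ Real.cos θ ^ (2 * n) :=
  calc 1 - n * θ ^ 2 = 1 + n * -θ ^ 2 := by ring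
    _ ≤ (1 + -θ ^ 2) ^ n := one_add_mul_le_pow (by linarith) n
    _ ≤ (Real.cos θ ^ 2) ^ n := by
        refine pow_le_pow_left₀ (by linarith) ?_ n
        rw [Real.cos_sq']
        linarith [Real.sin_sq_le_sq (x := θ)]
    _ = Real.cos θ ^ (2 * n) := (pow_mul _ _ _).symm

theorem one_le_deriv_sinPeak (n : ℕ) :
    1 ≤ deriv (sinPeak n) (1 / 2 - 1 / (2 * √(n + 1)) / Real.pi) := by
  set s : ℝ := √(n + 1)
  have hs : 1 ≤ s := Real.one_le_sqrt.2 (by linarith [n.cast_nonneg (α := ℝ)])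
  set θ : ℝ := 1 / (2 * s)
  have hsθ : 2 * s * θ = 1 := mul_one_div_cancel (by positivity)
  have hθ : 0 ≤ θ := by positivity
  have hθ_le : θ ≤ 1 / 2 := by nlinarith
  have hsin : 2 / Real.pi * θ ≤ Real.sin θ :=
    Real.mul_le_sin hθ (by linarith [Real.pi_gt_three])
  have hcos : 0 ≤ Real.cos θ :=
    Real.cos_nonneg_of_neg_pi_div_two_le_of_le (by linarith [Real.pi_pos])
      (by linarith [Real.pi_gt_three])
  have hcos_pow : 3 / 4 ≤ Real.cos θ ^ (2 * n + 1) :=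
    calc 3 / 4 = 1 - s ^ 2 * θ ^ 2 := by linear_combination (2 * s * θ + 1) / 4 * hsθ
      _ = 1 - (n + 1 : ℕ) * θ ^ 2 := by rw [Real.sq_sqrt (by positivity)]; push_cast; rfl
      _ ≤ Real.cos θ ^ (2 * (n + 1)) := one_sub_mul_sq_le_cos_pow (by nlinarith) (n + 1)
      _ ≤ Real.cos θ ^ (2 * n + 1) :=
          pow_le_pow_of_le_one hcos (Real.cos_le_one θ) (by omega)
  have hangle : Real.pi * (1 / 2 - θ / Real.pi) = Real.pi / 2 - θ := by field_simp
  rw [deriv_sinPeak, hangle, Real.sin_pi_div_two_sub, Real.cos_pi_div_two_sub]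
  calc (1 : ℝ) ≤ 3 / 2 * (2 * s * θ) := by rw [hsθ]; norm_num
    _ = 2 * Real.pi * s * (3 / 4 * (2 / Real.pi * θ)) := by field_simp; ring
    _ ≤ 2 * Real.pi * s * (Real.cos θ ^ (2 * n + 1) * Real.sin θ) := by gcongr

theorem eventually_exists_one_le_deriv_sinPeak {δ : ℝ} (hδ : 0 < δ) :
    ∀ᶠ n in atTop, ∃ q ∈ Set.Ico (1 / 2 - δ) (1 / 2), 1 ≤ deriv (sinPeak n) q := by
  have hsqrt : Tendsto (fun n : ℕ => 2 * √((n : ℝ) + 1)) atTop atTop :=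
    ((Real.tendsto_sqrt_atTop.comp
      (tendsto_atTop_add_const_right _ _ tendsto_natCast_atTop_atTop)).const_mul_atTop two_pos)
  have hlim : Tendsto (fun n : ℕ => 1 / (2 * √((n : ℝ) + 1)) / Real.pi) atTop (nhds 0) := by
    simpa only [zero_div] using (tendsto_const_nhds.div_atTop hsqrt).div_const Real.pi
  filter_upwards [hlim.eventually_le_const hδ] with n hn
  have hpos : 0 < 1 / (2 * √((n : ℝ) + 1)) / Real.pi := by positivity
  exact ⟨_, ⟨by linarith, by linarith⟩, one_le_deriv_sinPeak n⟩

theorem abs_deriv_deriv_sinPeak_le (n : ℕ) (x : ℝ) : |deriv (deriv (sinPeak n)) x| ≤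
    4 * Real.pi ^ 2 * (n + 1) ^ 2 * (Real.sin (Real.pi * x) ^ 2) ^ n := by
  have hsqrt : √((n : ℝ) + 1) ≤ n + 1 := Real.sqrt_le_left (by positivity) |>.2 (by nlinarith)
  have hfactor : |(2 * (n : ℝ) + 1) * Real.cos (Real.pi * x) ^ 2 - Real.sin (Real.pi * x) ^ 2| ≤
      2 * ((n : ℝ) + 1) := by
    have hcos := Real.cos_sq_le_one (Real.pi * x)
    rw [Real.sin_sq, abs_le]
    constructor <;> nlinarith [sq_nonneg (Real.cos (Real.pi * x))]
  calc |deriv (deriv (sinPeak n)) x|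
      = |2 * Real.pi ^ 2 * √(n + 1) * (Real.sin (Real.pi * x) ^ 2) ^ n *
        ((2 * n + 1) * Real.cos (Real.pi * x) ^ 2 - Real.sin (Real.pi * x) ^ 2)| := by
        rw [deriv_deriv_sinPeak, ← pow_mul]
        ring_nf
    _ = 2 * Real.pi ^ 2 * √(n + 1) * (Real.sin (Real.pi * x) ^ 2) ^ n *
        |(2 * n + 1) * Real.cos (Real.pi * x) ^ 2 - Real.sin (Real.pi * x) ^ 2| := by
        rw [abs_mul, abs_of_nonneg (a := _ * _) (by positivity)]
    _ ≤ 2 * Real.pi ^ 2 * (n + 1) * (Real.sin (Real.pi * x) ^ 2) ^ n * (2 * (n + 1)) := by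
        gcongr
    _ = _ := by ring

theorem sin_pi_mul_sq_le_cos_pi_mul_sq {η x : ℝ} (hη : 0 ≤ η) (hηx : η ≤ |x - 1 / 2|)
    (hx : |x - 1 / 2| ≤ 1 / 2) : Real.sin (Real.pi * x) ^ 2 ≤ Real.cos (Real.pi * η) ^ 2 := by
  have hshift : Real.sin (Real.pi * x) = Real.cos (Real.pi * |x - 1 / 2|) := by
    rw [← abs_of_pos Real.pi_pos, ← abs_mul, Real.cos_abs, abs_of_pos Real.pi_pos, mul_sub,
      mul_one_div, Real.cos_sub_pi_div_two]
  have hle : Real.pi * |x - 1 / 2| ≤ Real.pi / 2 := by nlinarith [Real.pi_pos]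
  have hnonneg : 0 ≤ Real.pi * |x - 1 / 2| := by positivity
  rw [hshift]
  refine pow_le_pow_left₀
    (Real.cos_nonneg_of_neg_pi_div_two_le_of_le (by linarith [Real.pi_pos]) hle)
    (Real.cos_le_cos_of_nonneg_of_le_pi (by positivity) (by linarith [Real.pi_pos]) ?_) 2
  gcongr

theorem eventually_abs_deriv_deriv_sinPeak_le {η δ : ℝ} (hη : η ∈ Set.Ioc (0 : ℝ) (1 / 2))
    (hδ : 0 < δ) : ∀ᶠ n in atTop, ∀ x ∈ Set.Icc (0 : ℝ) 1, η ≤ |x - 1 / 2| →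
      |deriv (deriv (sinPeak n)) x| ≤ δ := by
  have hr_lt : |Real.cos (Real.pi * η) ^ 2| < 1 := by
    have hsin : 0 < Real.sin (Real.pi * η) := Real.sin_pos_of_pos_of_lt_pi
      (mul_pos Real.pi_pos hη.1) (by nlinarith [hη.2, Real.pi_pos])
    rw [abs_of_nonneg (sq_nonneg _), Real.cos_sq']
    linarith [pow_pos hsin 2]
  have hlim : Tendsto (fun n : ℕ => 4 * Real.pi ^ 2 * (((n : ℝ) + 1) ^ 2 *
      (Real.cos (Real.pi * η) ^ 2) ^ n)) atTop (nhds 0) := by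
    have hpow (i : ℕ) := tendsto_pow_const_mul_const_pow_of_abs_lt_one i hr_lt
    convert (((hpow 2).add ((hpow 1).const_mul 2)).add (hpow 0)).const_mul (4 * Real.pi ^ 2) using 2
    · ring
    · ring
  filter_upwards [hlim.eventually_le_const hδ] with n hn x hx hηx
  have hx' : |x - 1 / 2| ≤ 1 / 2 := abs_le.2 ⟨by linarith [hx.1], by linarith [hx.2]⟩
  calc |deriv (deriv (sinPeak n)) x|
      ≤ 4 * Real.pi ^ 2 * (n + 1) ^ 2 * (Real.sin (Real.pi * x) ^ 2) ^ n :=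
        abs_deriv_deriv_sinPeak_le n x
    _ ≤ 4 * Real.pi ^ 2 * (n + 1) ^ 2 * (Real.cos (Real.pi * η) ^ 2) ^ n := by
        gcongr _ * ?_ ^ n
        exact sin_pi_mul_sq_le_cos_pi_mul_sq hη.1.le hηx hx'
    _ ≤ δ := by rwa [mul_assoc]

end SinPeak

section SinPeakLift

/-- The lift `x + ε (sinPeak 1 x + sinPeak n x)` of a circle diffeomorphism: the wide bump
`sinPeak 1` moves points away from `ℤ` at a speed independent of `n`, and the narrow bump
`sinPeak n` creates a jump of the derivative just before `1 / 2`. -/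
noncomputable def sinPeakLift (ε : ℝ) (n : ℕ) (x : ℝ) : ℝ :=
  x + ε * (sinPeak 1 x + sinPeak n x)

variable {ε : ℝ} {n : ℕ}

theorem analyticAt_sinPeakLift (ε : ℝ) (n : ℕ) (x : ℝ) : AnalyticAt ℝ (sinPeakLift ε n) x :=
  analyticAt_id.add (analyticAt_const.mul ((analyticAt_sinPeak 1 x).add (analyticAt_sinPeak n x)))

theorem contDiff_sinPeakLift (ε : ℝ) (n : ℕ) {k : WithTop ℕ∞} : ContDiff ℝ k (sinPeakLift ε n) :=
  contDiff_iff_contDiffAt.2 fun x => (analyticAt_sinPeakLift ε n x).contDiffAt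

theorem sinPeakLift_add_one (ε : ℝ) (n : ℕ) (x : ℝ) :
    sinPeakLift ε n (x + 1) = sinPeakLift ε n x + 1 := by
  rw [sinPeakLift, sinPeakLift, sinPeak_add_one, sinPeak_add_one, add_right_comm]

theorem sinPeakLift_eq_self_iff (hε : ε ≠ 0) {x : ℝ} :
    sinPeakLift ε n x = x ↔ ∃ m : ℤ, x = m := by
  rw [sinPeakLift, add_eq_left, mul_eq_zero_iff_left hε,
    add_eq_zero_iff_of_nonneg (sinPeak_nonneg 1 x) (sinPeak_nonneg n x), sinPeak_eq_zero_iff,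
    sinPeak_eq_zero_iff, and_self]

theorem deriv_sinPeakLift (ε : ℝ) (n : ℕ) (x : ℝ) : deriv (sinPeakLift ε n) x =
    1 + ε * (deriv (sinPeak 1) x + deriv (sinPeak n) x) :=
  have hpeak (k : ℕ) : HasDerivAt (sinPeak k) (deriv (sinPeak k) x) x :=
    (analyticAt_sinPeak k x).differentiableAt.hasDerivAt
  ((hasDerivAt_id x).add (((hpeak 1).add (hpeak n)).const_mul ε)).deriv

theorem deriv_deriv_sinPeakLift (ε : ℝ) (n : ℕ) (x : ℝ) : deriv (deriv (sinPeakLift ε n)) x =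
    ε * (deriv (deriv (sinPeak 1)) x + deriv (deriv (sinPeak n)) x) := by
  have hpeak (k : ℕ) : HasDerivAt (deriv (sinPeak k)) (deriv (deriv (sinPeak k)) x) x :=
    (analyticAt_sinPeak k x).deriv.differentiableAt.hasDerivAt
  rw [funext (deriv_sinPeakLift ε n)]
  exact ((((hpeak 1).add (hpeak n)).const_mul ε).const_add 1).deriv

theorem deriv_sinPeakLift_zero (ε : ℝ) (n : ℕ) : deriv (sinPeakLift ε n) 0 = 1 := by
  simp [deriv_sinPeakLift, deriv_sinPeak]

theorem deriv_deriv_sinPeakLift_zero (ε : ℝ) (hn : n ≠ 0) :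
    deriv (deriv (sinPeakLift ε n)) 0 = 0 := by
  simp [deriv_deriv_sinPeakLift, deriv_deriv_sinPeak, hn]

theorem pi_sq_lt_ten : Real.pi ^ 2 < 10 := by
  nlinarith [Real.pi_lt_d2, Real.pi_pos]

theorem half_le_deriv_sinPeakLift (hε : 0 ≤ ε) (hε' : ε ≤ 1 / 160) (n : ℕ) (x : ℝ) :
    1 / 2 ≤ deriv (sinPeakLift ε n) x := by
  have hpeak (k : ℕ) : -40 ≤ deriv (sinPeak k) x := by
    linarith [(abs_le.1 (abs_deriv_sinPeak_le k x)).1, pi_sq_lt_ten]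
  rw [deriv_sinPeakLift]
  nlinarith [hpeak 1, hpeak n]

theorem deriv_sinPeakLift_pos (hε : 0 ≤ ε) (hε' : ε ≤ 1 / 160) (n : ℕ) (x : ℝ) :
    0 < deriv (sinPeakLift ε n) x :=
  one_half_pos.trans_le (half_le_deriv_sinPeakLift hε hε' n x)

theorem integral_abs_deriv_deriv_sinPeakLift_le (hε : 0 ≤ ε) (n : ℕ) :
    ∫ x in (0 : ℝ)..1, |deriv (deriv (sinPeakLift ε n)) x| ≤ 80 * ε := by
  have hcont (k : ℕ) : Continuous fun x => |deriv (deriv (sinPeak k)) x| :=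
    (contDiff_deriv_of_two (contDiff_sinPeak k)).continuous_deriv_one.abs
  have hcont' : Continuous (deriv (deriv (sinPeakLift ε n))) :=
    (contDiff_deriv_of_two (contDiff_sinPeakLift ε n)).continuous_deriv_one
  calc ∫ x in (0 : ℝ)..1, |deriv (deriv (sinPeakLift ε n)) x|
      ≤ ∫ x in (0 : ℝ)..1,
        ε * (|deriv (deriv (sinPeak 1)) x| + |deriv (deriv (sinPeak n)) x|) := by
        refine integral_mono zero_le_one (hcont'.abs.intervalIntegrable _ _)
          ((((hcont 1).add (hcont n)).const_mul ε).intervalIntegrable _ _) fun x => ?_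
        rw [deriv_deriv_sinPeakLift, abs_mul, abs_of_nonneg hε]
        exact mul_le_mul_of_nonneg_left (abs_add_le _ _) hε
    _ = ε * ((∫ x in (0 : ℝ)..1, |deriv (deriv (sinPeak 1)) x|) +
        ∫ x in (0 : ℝ)..1, |deriv (deriv (sinPeak n)) x|) := by
        rw [integral_const_mul, integral_add ((hcont 1).intervalIntegrable _ _)
          ((hcont n).intervalIntegrable _ _)]
    _ ≤ ε * (40 + 40) := by
        gcongr <;> exact (integral_abs_deriv_deriv_sinPeak_le _).trans (by linarith [pi_sq_lt_ten])
    _ = 80 * ε := by ring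

theorem abs_logDeriv_deriv_sinPeakLift_le (hε : 0 ≤ ε) (hε' : ε ≤ 1 / 160) (n : ℕ) (x : ℝ) :
    |logDeriv (deriv (sinPeakLift ε n)) x| ≤ 2 * |deriv (deriv (sinPeakLift ε n)) x| := by
  have hderiv := half_le_deriv_sinPeakLift hε hε' n x
  rw [logDeriv_apply, abs_div, abs_of_pos (one_half_pos.trans_le hderiv),
    div_le_iff₀ (one_half_pos.trans_le hderiv)]
  nlinarith [abs_nonneg (deriv (deriv (sinPeakLift ε n)) x)]

theorem exp_integral_abs_logDeriv_deriv_sinPeakLift_le (hε : 0 ≤ ε) (hε' : ε ≤ 1 / 160) (n : ℕ) :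
    Real.exp (∫ x in (0 : ℝ)..1, |logDeriv (deriv (sinPeakLift ε n)) x|) ≤ 3 := by
  have hcont := continuous_logDeriv_deriv (contDiff_sinPeakLift ε n)
    (deriv_sinPeakLift_pos hε hε' n)
  have hcont' : Continuous (deriv (deriv (sinPeakLift ε n))) :=
    (contDiff_deriv_of_two (contDiff_sinPeakLift ε n)).continuous_deriv_one
  refine le_trans (Real.exp_le_exp.2 ?_) Real.exp_one_lt_three.le
  calc ∫ x in (0 : ℝ)..1, |logDeriv (deriv (sinPeakLift ε n)) x|
      ≤ ∫ x in (0 : ℝ)..1, 2 * |deriv (deriv (sinPeakLift ε n)) x| :=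
        integral_mono zero_le_one (hcont.abs.intervalIntegrable _ _)
          ((hcont'.abs.const_mul 2).intervalIntegrable _ _)
          (abs_logDeriv_deriv_sinPeakLift_le hε hε' n)
    _ = 2 * ∫ x in (0 : ℝ)..1, |deriv (deriv (sinPeakLift ε n)) x| := integral_const_mul _ _
    _ ≤ 1 := by linarith [integral_abs_deriv_deriv_sinPeakLift_le hε n]

theorem self_le_sinPeakLift (hε : 0 ≤ ε) (n : ℕ) (x : ℝ) : x ≤ sinPeakLift ε n x :=
  le_add_of_nonneg_right (mul_nonneg hε (add_nonneg (sinPeak_nonneg 1 x) (sinPeak_nonneg n x)))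

theorem add_le_sinPeakLift (hε : 0 ≤ ε) (n : ℕ) {x : ℝ} (hx : x ∈ Set.Icc (1 / 4 : ℝ) (3 / 4)) :
    x + ε / 8 ≤ sinPeakLift ε n x := by
  rw [sinPeakLift]
  nlinarith [one_eighth_le_sinPeak_one hx, sinPeak_nonneg n x]

theorem div_two_le_log_deriv_sinPeakLift (hε : 0 ≤ ε) (hε' : ε ≤ 1) {q : ℝ}
    (hq : q ∈ Set.Icc (0 : ℝ) (1 / 2)) (hq_deriv : 1 ≤ deriv (sinPeak n) q) :
    ε / 2 ≤ Real.log (deriv (sinPeakLift ε n) q) := by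
  have hderiv : 1 + ε ≤ deriv (sinPeakLift ε n) q := by
    rw [deriv_sinPeakLift]
    nlinarith [deriv_sinPeak_nonneg 1 hq]
  have hinv : (1 + ε)⁻¹ ≤ 1 - ε / 2 := by
    rw [inv_le_iff_one_le_mul₀ (by linarith)]
    nlinarith
  calc ε / 2 ≤ 1 - (1 + ε)⁻¹ := by linarith
    _ ≤ Real.log (1 + ε) := Real.one_sub_inv_le_log_of_pos (by linarith)
    _ ≤ _ := Real.log_le_log (by linarith) hderiv

theorem abs_logDeriv_deriv_sinPeakLift_le_of_flat (hε : 0 ≤ ε) (hε' : ε ≤ 1 / 160) {x : ℝ}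
    (hx : |deriv (deriv (sinPeak n)) x| ≤ 1) :
    |logDeriv (deriv (sinPeakLift ε n)) x| ≤ 322 * ε := by
  have hwide : |deriv (deriv (sinPeak 1)) x| ≤ 160 := by
    calc |deriv (deriv (sinPeak 1)) x|
        ≤ 4 * Real.pi ^ 2 * ((1 : ℕ) + 1) ^ 2 * (Real.sin (Real.pi * x) ^ 2) ^ 1 :=
          abs_deriv_deriv_sinPeak_le 1 x
      _ ≤ 4 * 10 * ((1 : ℕ) + 1) ^ 2 * 1 ^ 1 := by
          gcongr
          exacts [pi_sq_lt_ten.le, Real.sin_sq_le_one _]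
      _ = 160 := by norm_num
  refine (abs_logDeriv_deriv_sinPeakLift_le hε hε' n x).trans ?_
  rw [deriv_deriv_sinPeakLift, abs_mul, abs_of_nonneg hε]
  nlinarith [abs_add_le (deriv (deriv (sinPeak 1)) x) (deriv (deriv (sinPeak n)) x)]

theorem le_abs_sub_half_of_sinPeakLift_le (hε : 0 ≤ ε) (hε' : ε ≤ 1) {q x : ℝ}
    (hq : q ∈ Set.Ico (1 / 2 - ε / 40000) (1 / 2))
    (hx : sinPeakLift ε n x ≤ 1 / 2 ∨ sinPeakLift ε n q ≤ x) : ε / 16 ≤ |x - 1 / 2| := by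
  rcases hx with hx | hx
  · have hx_half := (self_le_sinPeakLift hε n x).trans hx
    refine le_trans ?_ (neg_le_abs _)
    rcases le_total (1 / 4) x with hx_quarter | hx_quarter
    · linarith [add_le_sinPeakLift hε n ⟨hx_quarter, by linarith⟩]
    · linarith
  · have hq_move := add_le_sinPeakLift hε n (x := q) ⟨by linarith [hq.1], by linarith [hq.2]⟩
    exact le_trans (by linarith [hq.1]) (le_abs_self _)

theorem liminf_integral_abs_logDeriv_deriv_iterate_sinPeakLift_pos (hε : 0 < ε)
    (hε' : ε ≤ 1 / 160)
    (hflat : ∀ x ∈ Set.Icc (0 : ℝ) 1, ε / 16 ≤ |x - 1 / 2| → |deriv (deriv (sinPeak n)) x| ≤ 1)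
    {q : ℝ} (hq : q ∈ Set.Ico (1 / 2 - ε / 40000) (1 / 2))
    (hq_deriv : 1 ≤ deriv (sinPeak n) q) :
    0 < liminf (fun k : ℕ => 1 / (k : ℝ) *
      ∫ x in (0 : ℝ)..1, |logDeriv (deriv (sinPeakLift ε n)^[k]) x|) atTop := by
  have hfixed (m : ℤ) : Function.IsFixedPt (sinPeakLift ε n) m :=
    (sinPeakLift_eq_self_iff hε.ne').2 ⟨m, rfl⟩
  have hmove := add_le_sinPeakLift hε.le n (x := q) ⟨by linarith [hq.1], by linarith [hq.2]⟩
  have hq_mem : q ∈ Set.Icc (0 : ℝ) (1 / 2) := ⟨by linarith [hq.1], hq.2.le⟩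
  have hratio_nonneg : 0 ≤ (1 / 2 - q) / (sinPeakLift ε n q - q) :=
    div_nonneg (by linarith [hq.2]) (by linarith)
  have hratio : (1 / 2 - q) / (sinPeakLift ε n q - q) ≤ 1 / 5000 := by
    rw [div_le_iff₀ (by linarith)]
    linarith [hq.1]
  have hexp := exp_integral_abs_logDeriv_deriv_sinPeakLift_le hε.le hε' n
  refine liminf_integral_abs_logDeriv_deriv_iterate_pos (contDiff_sinPeakLift ε n)
    (deriv_sinPeakLift_pos hε.le hε' n) (by exact_mod_cast hfixed 0) (by exact_mod_cast hfixed 1)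
    (p := 1 / 2) (L := 322 * ε) (σ := ε / 4) ⟨hq_mem.1, by linarith [hq.2]⟩ hq.2
    (by linarith [hq.1])
    (fun x hx hx' => abs_logDeriv_deriv_sinPeakLift_le_of_flat hε.le hε'
      (hflat x hx (le_abs_sub_half_of_sinPeakLift_le hε.le (by linarith) hq hx')))
    (by positivity) ?_
  have hlog_half : Real.log (deriv (sinPeakLift ε n) (1 / 2)) = 0 := by
    rw [deriv_sinPeakLift, deriv_sinPeak_half, deriv_sinPeak_half]
    simp only [add_zero, mul_zero, Real.log_one]
  calc ε / 4 + 322 * ε * (Real.exp (∫ x in (0 : ℝ)..1, |logDeriv (deriv (sinPeakLift ε n)) x|) *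
        ((1 / 2 - q) / (sinPeakLift ε n q - q)) * (1 - 0))
      ≤ ε / 4 + 322 * ε * (3 * (1 / 5000) * (1 - 0)) := by gcongr
    _ ≤ ε / 2 := by linarith
    _ ≤ Real.log (deriv (sinPeakLift ε n) q) - Real.log (deriv (sinPeakLift ε n) (1 / 2)) := by
        rw [hlog_half, sub_zero]
        exact div_two_le_log_deriv_sinPeakLift hε.le (by linarith) hq_mem hq_deriv

theorem exists_liminf_integral_abs_logDeriv_deriv_iterate_sinPeakLift_pos (hε : 0 < ε)
    (hε' : ε ≤ 1 / 160) : ∃ n ≠ 0, 0 < liminf (fun k : ℕ => 1 / (k : ℝ) *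
      ∫ x in (0 : ℝ)..1, |logDeriv (deriv (sinPeakLift ε n)^[k]) x|) atTop := by
  obtain ⟨n, hflat, ⟨q, hq, hq_deriv⟩, hn⟩ :=
    ((eventually_abs_deriv_deriv_sinPeak_le (η := ε / 16) ⟨by positivity, by linarith⟩
      one_pos).and ((eventually_exists_one_le_deriv_sinPeak (δ := ε / 40000) (by positivity)).and
        (eventually_ne_atTop 0))).exists
  exact ⟨n, hn, liminf_integral_abs_logDeriv_deriv_iterate_sinPeakLift_pos hε hε' hflat hq hq_deriv⟩

end SinPeakLift

theorem exists_analytic_c1ac_undistorted_general (K : ℝ) (hK0 : 0 < K) :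
    ∃ f : ℝ → ℝ,
      (∀ x : ℝ, AnalyticAt ℝ f x) ∧
      (∀ x : ℝ, f (x + 1) = f x + 1) ∧
      (∀ x : ℝ, 0 < deriv f x) ∧
      (∀ x : ℝ, f x = x ↔ ∃ n : ℤ, x = (n : ℝ)) ∧
      deriv f 0 = 1 ∧
      deriv (deriv f) 0 = 0 ∧
      (∫ x in (0:ℝ)..1, |deriv (deriv f) x|) ≤ 2 * K ∧
      0 < Filter.liminf
        (fun n : ℕ => (1 / (n : ℝ)) *
          ∫ x in (0:ℝ)..1, |deriv (deriv (f^[n])) x / deriv (f^[n]) x|)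
        Filter.atTop := by
  have hε : 0 < min (K / 40) (1 / 160) := lt_min (by positivity) (by norm_num)
  have hε' : min (K / 40) (1 / 160) ≤ 1 / 160 := min_le_right _ _
  have hεK : min (K / 40) (1 / 160) ≤ K / 40 := min_le_left _ _
  obtain ⟨n, hn, hliminf⟩ :=
    exists_liminf_integral_abs_logDeriv_deriv_iterate_sinPeakLift_pos hε hε'
  exact ⟨sinPeakLift _ n, analyticAt_sinPeakLift _ n, sinPeakLift_add_one _ n,
    deriv_sinPeakLift_pos hε.le hε' n, fun x => sinPeakLift_eq_self_iff hε.ne',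
    deriv_sinPeakLift_zero _ n, deriv_deriv_sinPeakLift_zero _ hn,
    (integral_abs_deriv_deriv_sinPeakLift_le hε.le n).trans (by linarith), hliminf⟩

/-- Theorem 3: for every 0 < K ≤ 2 there is an analytic circle diffeomorphism with
rotation number 0, no hyperbolic fixed point, ∫|f''| ≤ 2K, which is
C^{1+AC}-undistorted. -/
theorem exists_analytic_c1ac_undistorted (K : ℝ) (hK0 : 0 < K) (hK2 : K ≤ 2) :
    ∃ f : ℝ → ℝ,
      (∀ x : ℝ, AnalyticAt ℝ f x) ∧
      (∀ x : ℝ, f (x + 1) = f x + 1) ∧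
      (∀ x : ℝ, 0 < deriv f x) ∧
      (∀ x : ℝ, f x = x ↔ ∃ n : ℤ, x = (n : ℝ)) ∧
      deriv f 0 = 1 ∧
      deriv (deriv f) 0 = 0 ∧
      (∫ x in (0:ℝ)..1, |deriv (deriv f) x|) ≤ 2 * K ∧
      0 < Filter.liminf
        (fun n : ℕ => (1 / (n : ℝ)) *
          ∫ x in (0:ℝ)..1, |deriv (deriv (f^[n])) x / deriv (f^[n]) x|)
        Filter.atTop :=
  exists_analytic_c1ac_undistorted_general K hK0
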